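/- Let 𝒳 ⊆ ℝ^d be a closed symmetric convex set with B(0, r) ⊆ 𝒳 ⊆ B(0, R) for some 0 < r ≤ R, let 𝒳^c be its dual set, and let C > 0. Let g : ℝ^d → ℝ satisfy g(z) ≥ (1/C²)‖z‖_{𝒳^c}² for all z, and define f(x) := sup_z (⟨x, z⟩ − g(z)). Assume that for every x the supremum is attained and f(x) ≥ 0. Then for all x₁, x₂ ∈ ℝ^d: |f(x₁) − f(x₂)| ≤ C²·‖x₁ − x₂‖_𝒳·max(‖x₁‖_𝒳, ‖x₂‖_𝒳). -/

import Mathlib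

open RealInnerProductSpace

/-- The dual set `C^c = {x : ⟨x,y⟩ ≤ 1 for all y ∈ C}` of a set `C ⊆ ℝ^d`. -/
def dualSet {d : ℕ} (C : Set (EuclideanSpace ℝ (Fin d))) : Set (EuclideanSpace ℝ (Fin d)) :=
  {x | ∀ y ∈ C, ⟪x, y⟫ ≤ 1}

/-!
Write `‖·‖` for the gauge of `𝒳` and `n` for the gauge of the dual set at `z`. Each function
`⟨·, z⟩ - g z` in the supremum defining `f` is controlled at `x` in one of two ways: if
`n ≤ C² ‖x‖`, moving from `x` to `y` costs at most `‖x - y‖ n ≤ C² ‖x - y‖ ‖x‖`; if `n ≥ C² ‖x‖`,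
the quadratic growth of `g` makes its value at `x` at most `n (‖x‖ - n / C²) ≤ 0 ≤ f y`. Hence
`f x ≤ f y + C² ‖x - y‖ ‖x‖`.
-/

theorem absorbent_polar_of_forall_exists_norm_le {𝕜 E F : Type*} [NormedField 𝕜]
    [AddCommGroup E] [Module 𝕜 E] [AddCommGroup F] [Module 𝕜 F]
    (B : E →ₗ[𝕜] F →ₗ[𝕜] 𝕜) {s : Set E}
    (hs : ∀ z, ∃ c, ∀ x ∈ s, ‖B x z‖ ≤ c) : Absorbent 𝕜 (B.polar s) := by
  refine absorbent_iff_inv_smul.2 fun z ↦ ?_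
  obtain ⟨c, hc⟩ := hs z
  filter_upwards [tendsto_norm_cobounded_atTop.eventually_ge_atTop c] with a ha x hx
  rw [map_smul, norm_smul, norm_inv]
  exact inv_mul_le_one_of_le₀ ((hc x hx).trans ha) (norm_nonneg a)

theorem absorbent_polar_innerₗ_of_isBounded {E : Type*} [NormedAddCommGroup E]
    [InnerProductSpace ℝ E] {s : Set E} (hs : Bornology.IsBounded s) :
    Absorbent ℝ ((innerₗ E).polar s) := by
  obtain ⟨R, hR⟩ := hs.exists_norm_le
  exact absorbent_polar_of_forall_exists_norm_le _ fun z ↦ ⟨R * ‖z‖, fun x hx ↦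
    (norm_inner_le_norm x z).trans (mul_le_mul_of_nonneg_right (hR x hx) (norm_nonneg z))⟩

theorem dualSet_eq_polar {d : ℕ} {s : Set (EuclideanSpace ℝ (Fin d))}
    (hs : ∀ x ∈ s, -x ∈ s) : dualSet s = (innerₗ _).polar s := by
  ext z
  simp only [LinearMap.polar_mem_iff, innerₗ_apply_apply, Real.norm_eq_abs]
  refine ⟨fun hz x hx ↦ abs_le'.2 ⟨?_, ?_⟩, fun hz x hx ↦ ?_⟩
  · simpa only [real_inner_comm] using hz x hx
  · simpa only [inner_neg_right, real_inner_comm] using hz (-x) (hs x hx)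
  · rw [real_inner_comm]
    exact (le_abs_self _).trans (hz x hx)

section Conjugate

variable {E F : Type*} [AddCommGroup E] [Module ℝ E] [AddCommGroup F] [Module ℝ F]
  (B : E →ₗ[ℝ] F →ₗ[ℝ] ℝ) {s : Set E}

theorem abs_apply_le_gauge_mul_gauge_polar (hs : Absorbent ℝ s)
    (hpolar : Absorbent ℝ (B.polar s)) (x : E) (z : F) :
    |B x z| ≤ gauge s x * gauge (B.polar s) z := by
  refine le_mul_of_forall_lt₀ fun a ha b hb ↦ ?_
  obtain ⟨a', ha'_pos, ha', x', hx', rfl⟩ := exists_lt_of_gauge_lt hs ha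
  obtain ⟨b', hb'_pos, hb', z', hz', rfl⟩ := exists_lt_of_gauge_lt hpolar hb
  calc |B (a' • x') (b' • z')| = a' * b' * |B x' z'| := by
        rw [map_smul, map_smul, LinearMap.smul_apply, smul_eq_mul, smul_eq_mul, abs_mul, abs_mul,
          abs_of_pos ha'_pos, abs_of_pos hb'_pos]
        ring
    _ ≤ a' * b' * 1 := by
        gcongr
        exact hz' x' hx'
    _ ≤ a * b := by
        rw [mul_one]
        exact mul_le_mul ha'.le hb'.le hb'_pos.le (ha'_pos.trans ha').le

variable {C : ℝ}

theorem apply_sub_apply_le_of_gauge_polar_le (hs : Absorbent ℝ s)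
    (hpolar : Absorbent ℝ (B.polar s)) {x : E} {z : F} (y : E)
    (hz : gauge (B.polar s) z ≤ C ^ 2 * gauge s x) :
    B x z - B y z ≤ C ^ 2 * gauge s (x - y) * gauge s x :=
  calc B x z - B y z = B (x - y) z := by rw [map_sub, LinearMap.sub_apply]
    _ ≤ gauge s (x - y) * gauge (B.polar s) z :=
        (le_abs_self _).trans (abs_apply_le_gauge_mul_gauge_polar B hs hpolar _ z)
    _ ≤ gauge s (x - y) * (C ^ 2 * gauge s x) :=
        mul_le_mul_of_nonneg_left hz (gauge_nonneg _)
    _ = C ^ 2 * gauge s (x - y) * gauge s x := by ring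

variable {g : F → ℝ}

theorem apply_sub_nonpos_of_le_gauge_polar (hC : C ≠ 0) (hs : Absorbent ℝ s)
    (hpolar : Absorbent ℝ (B.polar s)) {x : E} {z : F}
    (hg : (1 / C ^ 2) * gauge (B.polar s) z ^ 2 ≤ g z)
    (hz : C ^ 2 * gauge s x ≤ gauge (B.polar s) z) : B x z - g z ≤ 0 := by
  have hx : gauge s x ≤ 1 / C ^ 2 * gauge (B.polar s) z := by
    rwa [one_div, le_inv_mul_iff₀ (by positivity)]
  refine sub_nonpos.2 ?_
  calc B x z ≤ gauge s x * gauge (B.polar s) z :=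
        (le_abs_self _).trans (abs_apply_le_gauge_mul_gauge_polar B hs hpolar x z)
    _ ≤ 1 / C ^ 2 * gauge (B.polar s) z * gauge (B.polar s) z :=
        mul_le_mul_of_nonneg_right hx (gauge_nonneg z)
    _ = 1 / C ^ 2 * gauge (B.polar s) z ^ 2 := by ring
    _ ≤ g z := hg

theorem conjugate_le_add_gauge_mul_gauge (hC : C ≠ 0) (hs : Absorbent ℝ s)
    (hpolar : Absorbent ℝ (B.polar s)) (hg : ∀ z, (1 / C ^ 2) * gauge (B.polar s) z ^ 2 ≤ g z)
    {x y : E} {a b : ℝ} (ha : IsLUB (Set.range fun z ↦ B x z - g z) a)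
    (hb : b ∈ upperBounds (Set.range fun z ↦ B y z - g z)) (hb_nonneg : 0 ≤ b) :
    a ≤ b + C ^ 2 * gauge s (x - y) * gauge s x := by
  refine ha.2 (Set.forall_mem_range.2 fun z ↦ ?_)
  rcases le_total (gauge (B.polar s) z) (C ^ 2 * gauge s x) with hz | hz
  · have hyz : B y z - g z ≤ b := hb (Set.mem_range_self z)
    have hxyz := apply_sub_apply_le_of_gauge_polar_le B hs hpolar y hz
    linarith
  · have hxy := gauge_nonneg (s := s) (x - y)
    have hx := gauge_nonneg (s := s) x
    exact (apply_sub_nonpos_of_le_gauge_polar B hC hs hpolar (hg z) hz).trans (by positivity)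

theorem stmt12_general (hC : C ≠ 0) (hs : Absorbent ℝ s) (hs_neg : ∀ x ∈ s, -x ∈ s)
    (hpolar : Absorbent ℝ (B.polar s)) (hg : ∀ z, (1 / C ^ 2) * gauge (B.polar s) z ^ 2 ≤ g z)
    {f : E → ℝ} (hf : ∀ x, IsLUB (Set.range fun z ↦ B x z - g z) (f x))
    (hf_nonneg : ∀ x, 0 ≤ f x) (x₁ x₂ : E) :
    |f x₁ - f x₂| ≤ C ^ 2 * gauge s (x₁ - x₂) * max (gauge s x₁) (gauge s x₂) := by
  have hsub (x y : E) : f x - f y ≤ C ^ 2 * gauge s (x - y) * gauge s x :=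
    sub_le_iff_le_add'.2 <|
      conjugate_le_add_gauge_mul_gauge B hC hs hpolar hg (hf x) (hf y).1 (hf_nonneg y)
  have hcoef : 0 ≤ C ^ 2 * gauge s (x₁ - x₂) := mul_nonneg (sq_nonneg C) (gauge_nonneg _)
  have hsymm : gauge s (x₂ - x₁) = gauge s (x₁ - x₂) := by rw [← neg_sub, gauge_neg hs_neg]
  refine abs_sub_le_iff.2 ⟨(hsub x₁ x₂).trans ?_, (hsub x₂ x₁).trans ?_⟩
  · exact mul_le_mul_of_nonneg_left (le_max_left _ _) hcoef
  · rw [hsymm]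
    exact mul_le_mul_of_nonneg_left (le_max_right _ _) hcoef

end Conjugate

/-- If `g(z) ≥ (1/C²)‖z‖_{𝒳^c}²` and `f(x) = sup_z (⟨x,z⟩ − g(z))` with
the supremum attained and `f ≥ 0`, then
`|f(x₁) − f(x₂)| ≤ C²‖x₁−x₂‖_𝒳·max(‖x₁‖_𝒳, ‖x₂‖_𝒳)`. -/
theorem stmt12 {d : ℕ} (𝒳 : Set (EuclideanSpace ℝ (Fin d))) (r R C : ℝ)
    (hr : 0 < r) (hrR : r ≤ R) (hC : 0 < C)
    (hclosed : IsClosed 𝒳) (hconv : Convex ℝ 𝒳) (hsym : ∀ x ∈ 𝒳, -x ∈ 𝒳)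
    (hball₁ : Metric.closedBall (0 : EuclideanSpace ℝ (Fin d)) r ⊆ 𝒳)
    (hball₂ : 𝒳 ⊆ Metric.closedBall (0 : EuclideanSpace ℝ (Fin d)) R)
    (g f : EuclideanSpace ℝ (Fin d) → ℝ)
    (hg : ∀ z, (1 / C ^ 2) * gauge (dualSet 𝒳) z ^ 2 ≤ g z)
    (hattain : ∀ x, ∃ z, f x = ⟪x, z⟫ - g z ∧ ∀ z', ⟪x, z'⟫ - g z' ≤ f x)
    (hfnonneg : ∀ x, 0 ≤ f x)
    (x₁ x₂ : EuclideanSpace ℝ (Fin d)) :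
    |f x₁ - f x₂| ≤ C ^ 2 * gauge 𝒳 (x₁ - x₂) * max (gauge 𝒳 x₁) (gauge 𝒳 x₂) := by
  have hf (x) : IsLUB (Set.range fun z ↦ ⟪x, z⟫ - g z) (f x) :=
    let ⟨z, hz, hmax⟩ := hattain x
    IsGreatest.isLUB ⟨⟨z, hz.symm⟩, Set.forall_mem_range.2 hmax⟩
  have habs : Absorbent ℝ 𝒳 :=
    (absorbent_nhds_zero (Metric.closedBall_mem_nhds 0 hr)).mono hball₁
  have hpolar : Absorbent ℝ ((innerₗ _).polar 𝒳) :=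
    absorbent_polar_innerₗ_of_isBounded (Metric.isBounded_closedBall.subset hball₂)
  simp only [dualSet_eq_polar hsym] at hg
  exact stmt12_general (innerₗ _) hC.ne' habs hsym hpolar hg hf hfnonneg x₁ x₂
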